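/- Let N ≥ 2. Then for every φ ∈ C_c^∞(ℝ^N) (smooth, compactly supported, real-valued), ∫_{ℝ^N} |x|^N ∑_{(i_1,…,i_N)∈{1,…,N}^N} ( ∂^N φ/∂x_{i_1}⋯∂x_{i_N}(x) ) · ( ∂^N log|x| / ∂x_{i_1}⋯∂x_{i_N}(x) ) dx = − ℓ_N · ω_{N−1} · φ(0). Equivalently, log|x| is a fundamental solution (up to the factor −ℓ_N ω_{N−1}) of the operator (−1)^N ∑_{i_1,…,i_N} ∂^N(|x|^N ∂^N ·). -/

import Mathlib

open MeasureTheory Metric Filter Matrix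

noncomputable section

/-- The mixed partial derivative `∂^m u / ∂x_{i 0} ⋯ ∂x_{i (m-1)} (x)`, realized as the
iterated Fréchet derivative applied to the corresponding standard basis vectors. -/
def mixedPartial (N m : ℕ) (u : EuclideanSpace ℝ (Fin N) → ℝ)
    (i : Fin m → Fin N) (x : EuclideanSpace ℝ (Fin N)) : ℝ :=
  iteratedFDeriv ℝ m u x fun k => EuclideanSpace.single (i k) 1

/-- The Frobenius norm `|∇^m u (x)|` of the tensor of `m`-th order partial derivatives. -/
def gradNorm (N m : ℕ) (u : EuclideanSpace ℝ (Fin N) → ℝ)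
    (x : EuclideanSpace ℝ (Fin N)) : ℝ :=
  Real.sqrt (∑ i : Fin m → Fin N, mixedPartial N m u i x ^ 2)

/-- The function `x ↦ log |x|`. -/
def logNorm (N : ℕ) (x : EuclideanSpace ℝ (Fin N)) : ℝ := Real.log ‖x‖

/-- The constant `ℓ_N = ∑ (∂^N log|x|/∂x_{i_1}⋯∂x_{i_N} (e_1))²`. -/
def ell (N : ℕ) (hN : 0 < N) : ℝ :=
  ∑ i : Fin N → Fin N,
    mixedPartial N N (logNorm N) i (EuclideanSpace.single (⟨0, hN⟩ : Fin N) 1) ^ 2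

/-- `ω_{N-1}`, the surface measure of the unit sphere `𝕊^{N-1} ⊂ ℝ^N`,
expressed as `N` times the volume of the unit ball. -/
def omegaSphere (N : ℕ) : ℝ :=
  N * (volume (ball (0 : EuclideanSpace ℝ (Fin N)) 1)).toReal

open scoped ContDiff

theorem iterComp {N m : ℕ} (A : EuclideanSpace ℝ (Fin N) ≃L[ℝ] EuclideanSpace ℝ (Fin N))
    (u : EuclideanSpace ℝ (Fin N) → ℝ) (x : EuclideanSpace ℝ (Fin N))
    (v : Fin m → EuclideanSpace ℝ (Fin N)) :
    iteratedFDeriv ℝ m (u ∘ A) x v = iteratedFDeriv ℝ m u (A x) (fun k => A (v k)) := by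
  have := A.iteratedFDerivWithin_comp_right u uniqueDiffOn_univ (Set.mem_univ (A x)) m
  simp only [Set.preimage_univ, iteratedFDerivWithin_univ] at this
  rw [this]
  rfl

theorem orth_rows {N : ℕ} (R : EuclideanSpace ℝ (Fin N) ≃ₗᵢ[ℝ] EuclideanSpace ℝ (Fin N))
    (a b : Fin N) :
    ∑ k, (R (EuclideanSpace.single k 1)) a * (R (EuclideanSpace.single k 1)) b
      = if a = b then 1 else 0 := by
  have h : ∀ k c, (R (EuclideanSpace.single k 1)) c
      = (R.symm (EuclideanSpace.single c 1)) k := by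
    intro k c
    have := R.inner_map_eq_flip (EuclideanSpace.single k 1) (EuclideanSpace.single c 1)
    simpa [EuclideanSpace.inner_single_right, EuclideanSpace.inner_single_left] using this
  simp_rw [h]
  have h2 := R.symm.inner_map_map (EuclideanSpace.single a (1:ℝ)) (EuclideanSpace.single b 1)
  rw [PiLp.inner_apply] at h2
  simp only [RCLike.inner_apply, conj_trivial] at h2
  rw [show (∑ k, (R.symm (EuclideanSpace.single a 1)) k * (R.symm (EuclideanSpace.single b 1)) k)
    = ∑ k, (R.symm (EuclideanSpace.single b 1)) k * (R.symm (EuclideanSpace.single a 1)) k from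
    Finset.sum_congr rfl (fun _ _ => mul_comm _ _), h2]
  simp [EuclideanSpace.inner_single_left]

theorem multi_inv {N m : ℕ} (R : EuclideanSpace ℝ (Fin N) ≃ₗᵢ[ℝ] EuclideanSpace ℝ (Fin N))
    (A B : ContinuousMultilinearMap ℝ (fun _ : Fin m => EuclideanSpace ℝ (Fin N)) ℝ) :
    ∑ i : Fin m → Fin N, A (fun k => R (EuclideanSpace.single (i k) 1)) *
        B (fun k => R (EuclideanSpace.single (i k) 1))
      = ∑ i : Fin m → Fin N, A (fun k => EuclideanSpace.single (i k) 1) *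
        B (fun k => EuclideanSpace.single (i k) 1) := by
  have hx : ∀ y : EuclideanSpace ℝ (Fin N), y = ∑ k, y k • EuclideanSpace.single k (1:ℝ) := by
    intro y
    have := (EuclideanSpace.basisFun (Fin N) ℝ).sum_repr y
    simpa using this.symm
  have key : ∀ (C : ContinuousMultilinearMap ℝ (fun _ : Fin m => EuclideanSpace ℝ (Fin N)) ℝ)
      (i : Fin m → Fin N), C (fun k => R (EuclideanSpace.single (i k) 1)) =
      ∑ κ : Fin m → Fin N, (∏ k, (R (EuclideanSpace.single (i k) 1)) (κ k)) *
        C (fun k => EuclideanSpace.single (κ k) 1) := by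
    intro C i
    have h1 : (fun k => R (EuclideanSpace.single (i k) 1)) =
        fun k => ∑ l, (R (EuclideanSpace.single (i k) 1)) l • EuclideanSpace.single l (1:ℝ) := by
      funext k; exact hx _
    rw [h1, C.map_sum]
    refine Finset.sum_congr rfl fun κ _ => ?_
    rw [C.map_smul_univ, smul_eq_mul]
  simp_rw [key A, key B, Finset.sum_mul_sum]
  rw [Finset.sum_comm]
  refine Finset.sum_congr rfl fun κ _ => ?_
  rw [Finset.sum_comm]
  have h3 : ∀ κ' : Fin m → Fin N, ∑ i : Fin m → Fin N,
      ((∏ k, (R (EuclideanSpace.single (i k) 1)) (κ k)) *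
        A (fun k => EuclideanSpace.single (κ k) 1)) *
      ((∏ k, (R (EuclideanSpace.single (i k) 1)) (κ' k)) *
        B (fun k => EuclideanSpace.single (κ' k) 1)) =
      (if κ = κ' then 1 else 0) * (A (fun k => EuclideanSpace.single (κ k) 1) *
        B (fun k => EuclideanSpace.single (κ' k) 1)) := by
    intro κ'
    have h4 : ∑ i : Fin m → Fin N, ∏ k, ((R (EuclideanSpace.single (i k) 1)) (κ k) *
        (R (EuclideanSpace.single (i k) 1)) (κ' k)) = if κ = κ' then 1 else 0 := by
      rw [← Fintype.piFinset_univ, ← Finset.prod_univ_sum (fun _ => Finset.univ)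
        (fun k l => (R (EuclideanSpace.single l 1)) (κ k) *
          (R (EuclideanSpace.single l 1)) (κ' k))]
      simp_rw [orth_rows R]
      by_cases h : κ = κ'
      · simp [h]
      · rw [if_neg h]
        obtain ⟨k, hk⟩ := Function.ne_iff.1 h
        exact Finset.prod_eq_zero (Finset.mem_univ k) (by simp [hk])
    rw [← h4, Finset.sum_mul]
    refine Finset.sum_congr rfl fun i _ => ?_
    rw [Finset.prod_mul_distrib]; ring
  simp_rw [h3]
  simp

/-- Frobenius pairing of the `N`-th derivative tensors. -/
def pairT (N : ℕ) (u w : EuclideanSpace ℝ (Fin N) → ℝ) (x : EuclideanSpace ℝ (Fin N)) : ℝ :=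
  ∑ i : Fin N → Fin N, mixedPartial N N u i x * mixedPartial N N w i x

theorem pairT_rot {N : ℕ} (R : EuclideanSpace ℝ (Fin N) ≃ₗᵢ[ℝ] EuclideanSpace ℝ (Fin N))
    (u w : EuclideanSpace ℝ (Fin N) → ℝ) (x : EuclideanSpace ℝ (Fin N)) :
    pairT N (u ∘ R) (w ∘ R) x = pairT N u w (R x) := by
  unfold pairT mixedPartial
  rw [← multi_inv R (iteratedFDeriv ℝ N u (R x))]
  refine Finset.sum_congr rfl fun i _ => ?_
  have := fun u => iterComp (m := N) R.toContinuousLinearEquiv u x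
    (fun k => EuclideanSpace.single (i k) 1)
  simp only [LinearIsometryEquiv.coe_toContinuousLinearEquiv] at this
  rw [this, this]

theorem iterScale {N m : ℕ} {r : ℝ} (hr : r ≠ 0)
    (u : EuclideanSpace ℝ (Fin N) → ℝ) (x : EuclideanSpace ℝ (Fin N)) :
    iteratedFDeriv ℝ m (fun y => u (r • y)) x = r ^ m • iteratedFDeriv ℝ m u (r • x) := by
  ext v
  have := iterComp (m := m) (ContinuousLinearEquiv.smulLeft (Units.mk0 r hr)) u x v
  have h2 : (u ∘ (ContinuousLinearEquiv.smulLeft (R₁ := ℝ) (Units.mk0 r hr) :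
      EuclideanSpace ℝ (Fin N) ≃L[ℝ] EuclideanSpace ℝ (Fin N))) = fun y => u (r • y) := by
    funext y; rfl
  rw [h2] at this
  rw [this]
  have h3 := (iteratedFDeriv ℝ m u (r • x)).map_smul_univ (fun _ => r) v
  simp only [Finset.prod_const, Finset.card_univ, Fintype.card_fin] at h3
  exact h3

theorem pairT_scale {N : ℕ} {r : ℝ} (hr : r ≠ 0)
    (u w : EuclideanSpace ℝ (Fin N) → ℝ) (x : EuclideanSpace ℝ (Fin N)) :
    pairT N (fun y => u (r • y)) (fun y => w (r • y)) x
      = r ^ (2 * N) * pairT N u w (r • x) := by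
  unfold pairT mixedPartial
  rw [iterScale hr, iterScale hr, Finset.mul_sum]
  refine Finset.sum_congr rfl fun i _ => ?_
  simp only [_root_.smul_apply, smul_eq_mul]
  ring

theorem logNorm_rot {N : ℕ} (R : EuclideanSpace ℝ (Fin N) ≃ₗᵢ[ℝ] EuclideanSpace ℝ (Fin N)) :
    logNorm N ∘ R = logNorm N := by
  funext x; simp [logNorm]

theorem logNorm_contDiffAt {N : ℕ} {n : WithTop ℕ∞} {x : EuclideanSpace ℝ (Fin N)} (hx : x ≠ 0) :
    ContDiffAt ℝ n (logNorm N) x :=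
  (contDiffAt_norm ℝ hx).log (norm_ne_zero_iff.2 hx)

theorem logNorm_scale {N : ℕ} (hN : N ≠ 0) {r : ℝ} (hr : r ≠ 0)
    {x : EuclideanSpace ℝ (Fin N)} (hx : x ≠ 0) :
    iteratedFDeriv ℝ N (fun y => logNorm N (r • y)) x = iteratedFDeriv ℝ N (logNorm N) x := by
  have h1 : (fun y => logNorm N (r • y)) =ᶠ[nhds x] (fun y => Real.log |r|) + logNorm N := by
    filter_upwards [isOpen_ne.mem_nhds hx] with y hy
    simp only [logNorm, norm_smul, Real.norm_eq_abs, Pi.add_apply]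
    exact Real.log_mul (abs_ne_zero.2 hr) (norm_ne_zero_iff.2 hy)
  rw [(h1.iteratedFDeriv ℝ N).eq_of_nhds,
    iteratedFDeriv_add_apply contDiffAt_const (logNorm_contDiffAt hx),
    iteratedFDeriv_const_of_ne hN]
  simp

/-- iterated Euler derivative -/
def Gseq (f : ℝ → ℝ) : ℕ → ℝ → ℝ
  | 0 => f
  | k + 1 => fun r => r * deriv (Gseq f k) r

theorem Gseq_contDiff {f : ℝ → ℝ} (hf : ContDiff ℝ ∞ f) (k : ℕ) : ContDiff ℝ ∞ (Gseq f k) := by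
  induction k with
  | zero => exact hf
  | succ k ih =>
    exact contDiff_id.mul ((contDiff_infty_iff_deriv.1 ih).2)

theorem Gseq_supp {f : ℝ → ℝ} (hf : HasCompactSupport f) (k : ℕ) :
    HasCompactSupport (Gseq f k) := by
  induction k with
  | zero => exact hf
  | succ k ih => exact HasCompactSupport.mul_left (f := fun r : ℝ => r) ih.deriv

theorem Gseq_zero {f : ℝ → ℝ} (k : ℕ) : Gseq f (k + 1) 0 = 0 := by
  simp [Gseq]

theorem Gseq_integral {f : ℝ → ℝ} (hf : ContDiff ℝ ∞ f) (hs : HasCompactSupport f) (k : ℕ) :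
    ∫ r in Set.Ioi (0:ℝ), r⁻¹ * Gseq f (k + 1) r = - Gseq f k 0 := by
  rw [← HasCompactSupport.integral_Ioi_deriv_eq ((Gseq_contDiff hf k).of_le (by simp))
    (Gseq_supp hs k)]
  refine setIntegral_congr_fun measurableSet_Ioi fun r hr => ?_
  have hr' : r ≠ 0 := ne_of_gt hr
  simp only [Gseq]
  field_simp

theorem Gseq_integrable {f : ℝ → ℝ} (hf : ContDiff ℝ ∞ f) (hs : HasCompactSupport f) (k : ℕ) :
    IntegrableOn (fun r => r⁻¹ * Gseq f (k + 1) r) (Set.Ioi (0:ℝ)) := by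
  have h : IntegrableOn (deriv (Gseq f k)) (Set.Ioi (0:ℝ)) :=
    (((Gseq_contDiff hf k).continuous_deriv (by simp)).integrable_of_hasCompactSupport
      (Gseq_supp hs k).deriv).integrableOn
  refine h.congr_fun (fun r hr => ?_) measurableSet_Ioi
  have hr' : r ≠ 0 := ne_of_gt hr
  simp only [Gseq]
  field_simp

theorem Gseq_iter {f : ℝ → ℝ} (hf : ContDiff ℝ ∞ f) (r : ℝ) (k : ℕ) :
    iteratedDeriv k (fun s => f (r * Real.exp s)) = fun s => Gseq f k (r * Real.exp s) := by
  induction k with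
  | zero => simp [Gseq]
  | succ k ih =>
    rw [iteratedDeriv_succ, ih]
    funext s
    have h1 : HasDerivAt (fun s => r * Real.exp s) (r * Real.exp s) s :=
      (Real.hasDerivAt_exp s).const_mul r
    have h2 : HasDerivAt (Gseq f k) (deriv (Gseq f k) (r * Real.exp s)) (r * Real.exp s) :=
      (((Gseq_contDiff hf k).differentiable (by simp)) _).hasDerivAt
    have := (h2.comp s h1).deriv
    simp only [Function.comp_def] at this
    rw [this, Gseq, mul_comm]

theorem faa_zero {N : ℕ} {h : ℝ → ℝ} (hh : ContDiff ℝ ∞ h) {x : EuclideanSpace ℝ (Fin N)}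
    (hx : x ≠ 0) (h0 : ∀ i ≤ N, iteratedDeriv i h (logNorm N x) = 0) :
    iteratedFDeriv ℝ N (h ∘ logNorm N) x = 0 := by
  have ho : IsOpen ({0}ᶜ : Set (EuclideanSpace ℝ (Fin N))) := isOpen_compl_singleton
  have hx' : x ∈ ({0}ᶜ : Set (EuclideanSpace ℝ (Fin N))) := hx
  obtain ⟨D, hD1, hD⟩ : ∃ D : ℝ, 1 ≤ D ∧ ∀ i ≤ N, ‖iteratedFDeriv ℝ i (logNorm N) x‖ ≤ D := by
    refine ⟨1 + ∑ i ∈ Finset.range (N + 1), ‖iteratedFDeriv ℝ i (logNorm N) x‖, ?_, ?_⟩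
    · have : 0 ≤ ∑ i ∈ Finset.range (N + 1), ‖iteratedFDeriv ℝ i (logNorm N) x‖ :=
        Finset.sum_nonneg fun _ _ => norm_nonneg _
      linarith
    · intro i hi
      have := Finset.single_le_sum (f := fun i => ‖iteratedFDeriv ℝ i (logNorm N) x‖)
        (fun _ _ => norm_nonneg _) (Finset.mem_range.2 (Nat.lt_succ_of_le hi))
      linarith
  have := norm_iteratedFDerivWithin_comp_le (𝕜 := ℝ) (n := N) (N := ∞) (t := Set.univ) (C := 0)
    (s := {0}ᶜ)
    (D := D) (f := logNorm N)
    hh.contDiffOn (fun y hy => (logNorm_contDiffAt hy).contDiffWithinAt)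
    (by exact_mod_cast le_top) uniqueDiffOn_univ ho.uniqueDiffOn (Set.mapsTo_univ _ _)
    hx' ?_ ?_
  · rw [iteratedFDerivWithin_of_isOpen N ho hx'] at this
    simpa using this
  · intro i hi
    rw [iteratedFDerivWithin_univ, norm_iteratedFDeriv_eq_norm_iteratedDeriv, h0 i hi]
    simp
  · intro i hi1 hi
    rw [iteratedFDerivWithin_of_isOpen i ho hx']
    exact (hD i hi).trans (le_self_pow₀ hD1 (by omega))

theorem faa_expand {N : ℕ} {h : ℝ → ℝ} (hh : ContDiff ℝ ∞ h) {x : EuclideanSpace ℝ (Fin N)}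
    (hx : x ≠ 0) (hx1 : logNorm N x = 0) :
    iteratedFDeriv ℝ N (h ∘ logNorm N) x = ∑ k ∈ Finset.range (N + 1),
      (iteratedDeriv k h 0 / k.factorial) • iteratedFDeriv ℝ N (fun y => logNorm N y ^ k) x := by
  set p : ℝ → ℝ := fun s => ∑ k ∈ Finset.range (N + 1),
    (iteratedDeriv k h 0 / k.factorial) * s ^ k with hp
  have hpc : ContDiff ℝ ∞ p := by
    refine ContDiff.sum fun k _ => ?_
    fun_prop
  have hz := faa_zero (hh.sub hpc) hx (by
    intro i hi
    rw [hx1, iteratedDeriv_fun_sub (hh.contDiffAt.of_le (by exact_mod_cast le_top))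
      (hpc.contDiffAt.of_le (by exact_mod_cast le_top))]
    rw [hp, iteratedDeriv_fun_sum (fun k _ => by fun_prop)]
    simp_rw [iteratedDeriv_const_mul_field, iteratedDeriv_fun_pow_zero]
    rw [Finset.sum_eq_single i]
    · have : (i.factorial : ℝ) ≠ 0 := by positivity
      simp; field_simp; simp
    · intro b _ hb
      simp [hb.symm]
    · intro hi'; simp at hi'; omega)
  have hl := logNorm_contDiffAt (n := N) hx
  have h1 : ((fun s => h s - p s) ∘ logNorm N) = (h ∘ logNorm N) - (p ∘ logNorm N) := rfl
  rw [h1, iteratedFDeriv_sub_apply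
    ((hh.contDiffAt.of_le (by exact_mod_cast le_top)).comp x hl)
    ((hpc.contDiffAt.of_le (by exact_mod_cast le_top)).comp x hl), sub_eq_zero] at hz
  rw [hz]
  have h2 : (p ∘ logNorm N) = fun y => ∑ k ∈ Finset.range (N + 1),
    ((iteratedDeriv k h 0 / k.factorial) • (fun y => logNorm N y ^ k)) y := by
    funext y; simp [hp]
  rw [h2, iteratedFDeriv_fun_sum_apply]
  · refine Finset.sum_congr rfl fun k _ => ?_
    rw [iteratedFDeriv_const_smul_apply (𝕜 := ℝ) (hl.pow k)]
  · intro k _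
    exact contDiffAt_const.smul (hl.pow k)

theorem exists_rot {N : ℕ} {x y : EuclideanSpace ℝ (Fin N)} (h : ‖x‖ = ‖y‖) :
    ∃ R : EuclideanSpace ℝ (Fin N) ≃ₗᵢ[ℝ] EuclideanSpace ℝ (Fin N), R x = y :=
  ⟨_, Submodule.reflection_sub h⟩

theorem pairT_radial {N : ℕ} (hN : 0 < N) {f : ℝ → ℝ} (hf : ContDiff ℝ ∞ f)
    {x : EuclideanSpace ℝ (Fin N)} (hx : x ≠ 0) :
    pairT N (fun y => f ‖y‖) (logNorm N) x = ‖x‖⁻¹ ^ (2 * N) * ∑ k ∈ Finset.range (N + 1),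
      Gseq f k ‖x‖ * (pairT N (fun y => logNorm N y ^ k) (logNorm N)
        (EuclideanSpace.single (⟨0, hN⟩ : Fin N) 1) / k.factorial) := by
  set e : EuclideanSpace ℝ (Fin N) := EuclideanSpace.single (⟨0, hN⟩ : Fin N) 1 with he
  have he1 : ‖e‖ = 1 := by simp [he]
  have he0 : e ≠ 0 := by rw [← norm_ne_zero_iff, he1]; exact one_ne_zero
  set r := ‖x‖ with hr
  have hr0 : r ≠ 0 := norm_ne_zero_iff.2 hx
  have hr1 : 0 < r := norm_pos_iff.2 hx
  obtain ⟨R, hR⟩ := exists_rot (x := e) (y := r⁻¹ • x) (by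
    rw [he1, norm_smul, norm_inv, norm_norm, inv_mul_cancel₀ hr0])
  have hxe : x = r • R e := by rw [hR, smul_smul, mul_inv_cancel₀ hr0, one_smul]
  have h1 := pairT_scale hr0 (fun y => f ‖y‖) (logNorm N) (R e)
  rw [← hxe] at h1
  have hRe : R e ≠ 0 := by rw [← norm_ne_zero_iff, R.norm_map, he1]; exact one_ne_zero
  have h2 : pairT N (fun y => f ‖r • y‖) (fun y => logNorm N (r • y)) (R e)
      = pairT N (fun y => f (r * ‖y‖)) (logNorm N) (R e) := by
    have : (fun y : EuclideanSpace ℝ (Fin N) => f ‖r • y‖) = fun y => f (r * ‖y‖) := by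
      funext y; rw [norm_smul, Real.norm_of_nonneg hr1.le]
    rw [this]
    unfold pairT mixedPartial
    rw [logNorm_scale hN.ne' hr0 hRe]
  have h3 := pairT_rot R (fun y => f (r * ‖y‖)) (logNorm N) e
  rw [logNorm_rot] at h3
  have h4 : ((fun y => f (r * ‖y‖)) ∘ R) = fun y => f (r * ‖y‖) := by
    funext y; simp
  rw [h4] at h3
  have h5 : pairT N (fun y => f (r * ‖y‖)) (logNorm N) e = ∑ k ∈ Finset.range (N + 1),
      Gseq f k r * (pairT N (fun y => logNorm N y ^ k) (logNorm N) e / k.factorial) := by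
    have h6 : (fun y : EuclideanSpace ℝ (Fin N) => f (r * ‖y‖)) =ᶠ[nhds e]
        (fun s => f (r * Real.exp s)) ∘ logNorm N := by
      filter_upwards [isOpen_ne.mem_nhds he0] with y hy
      simp [logNorm, Real.exp_log (norm_pos_iff.2 hy)]
    have h7 := (h6.iteratedFDeriv ℝ N).eq_of_nhds
    rw [faa_expand (h := fun s => f (r * Real.exp s)) (hf.comp (contDiff_const.mul Real.contDiff_exp)) he0
      (by simp [logNorm, he1])] at h7
    unfold pairT mixedPartial
    rw [h7]
    simp_rw [Gseq_iter hf, Real.exp_zero, mul_one]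
    simp_rw [Finset.sum_div, Finset.mul_sum]
    rw [Finset.sum_comm]
    refine Finset.sum_congr rfl fun i _ => ?_
    rw [_root_.sum_apply, Finset.sum_mul]
    refine Finset.sum_congr rfl fun k _ => ?_
    simp only [_root_.smul_apply, smul_eq_mul]
    ring
  rw [← h5, h3, ← h2, h1, ← mul_assoc, ← mul_pow, inv_mul_cancel₀ hr0, one_pow, one_mul]

theorem integral_radial {N : ℕ} (hN : 0 < N) {f : ℝ → ℝ} (hf : ContDiff ℝ ∞ f)
    (hs : HasCompactSupport f) :
    ∫ x, ‖x‖ ^ N * pairT N (fun y => f ‖y‖) (logNorm N) x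
      = -(ell N hN) * omegaSphere N * f 0 := by
  set e : EuclideanSpace ℝ (Fin N) := EuclideanSpace.single (⟨0, hN⟩ : Fin N) 1 with he
  set a : ℕ → ℝ := fun k => pairT N (fun y => logNorm N y ^ k) (logNorm N) e / k.factorial with ha
  have : Nontrivial (EuclideanSpace ℝ (Fin N)) := by
    refine ⟨e, 0, ?_⟩
    rw [← norm_ne_zero_iff]; simp [he]
  have ha0 : a 0 = 0 := by
    simp only [ha, pow_zero, pairT, mixedPartial]
    rw [iteratedFDeriv_const_of_ne hN.ne']
    simp
  have ha1 : a 1 = ell N hN := by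
    simp only [ha, pow_one, pairT, ell]
    simp [sq, he]
  have h1 : ∫ x, ‖x‖ ^ N * pairT N (fun y => f ‖y‖) (logNorm N) x =
      ∫ x : EuclideanSpace ℝ (Fin N), (fun r : ℝ => r ^ N * (r⁻¹ ^ (2 * N) *
        ∑ k ∈ Finset.range (N + 1), Gseq f k r * a k)) ‖x‖ := by
    refine integral_congr_ae ?_
    have : ∀ᵐ x : EuclideanSpace ℝ (Fin N), x ≠ 0 := by
      simp [ae_iff]
    filter_upwards [this] with x hx
    rw [pairT_radial hN hf hx]
  have h2 : ∫ r in Set.Ioi (0:ℝ), r ^ (N - 1) • (r ^ N * (r⁻¹ ^ (2 * N) *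
        ∑ k ∈ Finset.range (N + 1), Gseq f k r * a k)) = - ell N hN * f 0 := by
    have h3 : ∫ r in Set.Ioi (0:ℝ), r ^ (N - 1) • (r ^ N * (r⁻¹ ^ (2 * N) *
        ∑ k ∈ Finset.range (N + 1), Gseq f k r * a k)) =
        ∫ r in Set.Ioi (0:ℝ), ∑ k ∈ Finset.range N, a (k + 1) * (r⁻¹ * Gseq f (k + 1) r) := by
      refine setIntegral_congr_fun measurableSet_Ioi fun r hr => ?_
      have hr' : r ≠ 0 := ne_of_gt hr
      simp only [smul_eq_mul]
      rw [Finset.sum_range_succ', ha0, mul_zero, add_zero, ← mul_assoc, ← mul_assoc]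
      have : r ^ (N - 1) * r ^ N * r⁻¹ ^ (2 * N) = r⁻¹ := by
        obtain ⟨M, rfl⟩ : ∃ M, N = M + 1 := ⟨N - 1, by omega⟩
        simp only [Nat.add_sub_cancel]
        rw [← pow_add, inv_pow, mul_inv_eq_iff_eq_mul₀ (pow_ne_zero _ hr')]
        rw [show 2 * (M + 1) = M + (M + 1) + 1 by ring, pow_succ]
        field_simp
      rw [this, Finset.mul_sum]
      refine Finset.sum_congr rfl fun k _ => ?_
      ring
    rw [h3, integral_finsetSum _ (fun k _ => (Gseq_integrable hf hs k).const_mul _)]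
    simp_rw [integral_const_mul, Gseq_integral hf hs]
    rw [Finset.sum_eq_single 0]
    · simp only [zero_add, ha1, Gseq]; ring
    · intro k _ hk
      obtain ⟨j, rfl⟩ := Nat.exists_eq_succ_of_ne_zero hk
      simp [Gseq_zero]
    · intro h; simp at h; omega
  rw [h1, integral_fun_norm_addHaar volume (fun r : ℝ => r ^ N * (r⁻¹ ^ (2 * N) *
        ∑ k ∈ Finset.range (N + 1), Gseq f k r * a k)), finrank_euclideanSpace_fin, h2]
  simp only [smul_eq_mul, nsmul_eq_mul, omegaSphere, Measure.real]
  ring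

/-- The orthogonal group of `ℝ^N`. -/
abbrev OG (N : ℕ) : Type := unitary (EuclideanSpace ℝ (Fin N) →L[ℝ] EuclideanSpace ℝ (Fin N))

instance clm_contStar (N : ℕ) :
    ContinuousStar (EuclideanSpace ℝ (Fin N) →L[ℝ] EuclideanSpace ℝ (Fin N)) :=
  ⟨(ContinuousLinearMap.adjoint (𝕜 := ℝ) (E := EuclideanSpace ℝ (Fin N))
    (F := EuclideanSpace ℝ (Fin N))).continuous⟩

instance OG_compact (N : ℕ) : CompactSpace (OG N) := by
  have : ProperSpace (EuclideanSpace ℝ (Fin N) →L[ℝ] EuclideanSpace ℝ (Fin N)) :=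
    FiniteDimensional.proper ℝ _
  refine isCompact_iff_compactSpace.1 ?_
  refine (isCompact_closedBall (0 : EuclideanSpace ℝ (Fin N) →L[ℝ] EuclideanSpace ℝ (Fin N))
    1).of_isClosed_subset isClosed_unitary ?_
  intro U hU
  rw [mem_closedBall_zero_iff]
  exact ContinuousLinearMap.opNorm_le_bound _ zero_le_one
    (fun x => by rw [one_mul]; exact (Unitary.norm_map ⟨U, hU⟩ x).le)

instance OG_meas (N : ℕ) : MeasurableSpace (OG N) := borel _
instance OG_borel (N : ℕ) : BorelSpace (OG N) := ⟨rfl⟩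

instance OG_sc (N : ℕ) : SecondCountableTopology (OG N) := by
  have : ProperSpace (EuclideanSpace ℝ (Fin N) →L[ℝ] EuclideanSpace ℝ (Fin N)) :=
    FiniteDimensional.proper ℝ _
  infer_instance

/-- Normalised Haar measure. -/
def muO (N : ℕ) : Measure (OG N) := Measure.haarMeasure ⊤

instance muO_haar (N : ℕ) : (muO N).IsHaarMeasure := by unfold muO; infer_instance

instance muO_prob (N : ℕ) : IsProbabilityMeasure (muO N) :=
  ⟨by unfold muO; simpa using Measure.haarMeasure_self (K₀ := (⊤ : TopologicalSpace.PositiveCompacts (OG N)))⟩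

/-- `R⁻¹` as a linear isometry equivalence. -/
def rotI {N : ℕ} (R : OG N) : EuclideanSpace ℝ (Fin N) ≃ₗᵢ[ℝ] EuclideanSpace ℝ (Fin N) :=
  Unitary.linearIsometryEquiv R⁻¹

theorem rotI_coe {N : ℕ} (R : OG N) : (rotI R : EuclideanSpace ℝ (Fin N) → _) =
    ((R⁻¹ : OG N) : EuclideanSpace ℝ (Fin N) →L[ℝ] EuclideanSpace ℝ (Fin N)) := rfl

theorem iter_cont {N : ℕ} {φ : EuclideanSpace ℝ (Fin N) → ℝ} (hφ : ContDiff ℝ ∞ φ) (m : ℕ) :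
    Continuous (fun p : EuclideanSpace ℝ (Fin N) × OG N =>
      iteratedFDeriv ℝ m (φ ∘ rotI p.2) p.1) := by
  have h1 : (fun p : EuclideanSpace ℝ (Fin N) × OG N =>
      iteratedFDeriv ℝ m (φ ∘ rotI p.2) p.1) = fun p =>
      (ContinuousMultilinearMap.compContinuousLinearMapContinuousMultilinear ℝ
        (fun _ : Fin m => EuclideanSpace ℝ (Fin N)) (fun _ : Fin m => EuclideanSpace ℝ (Fin N)) ℝ
        (fun _ => ((p.2⁻¹ : OG N) : EuclideanSpace ℝ (Fin N) →L[ℝ] EuclideanSpace ℝ (Fin N))))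
      (iteratedFDeriv ℝ m φ
        (((p.2⁻¹ : OG N) : EuclideanSpace ℝ (Fin N) →L[ℝ] EuclideanSpace ℝ (Fin N)) p.1)) := by
    funext p
    rw [rotI_coe, ContinuousLinearMap.iteratedFDeriv_comp_right _ hφ _ (by exact_mod_cast le_top)]
    rfl
  rw [h1]
  have h2 : Continuous fun p : EuclideanSpace ℝ (Fin N) × OG N =>
      ((p.2⁻¹ : OG N) : EuclideanSpace ℝ (Fin N) →L[ℝ] EuclideanSpace ℝ (Fin N)) :=
    continuous_subtype_val.comp (continuous_inv.comp continuous_snd)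
  refine Continuous.clm_apply ?_ ?_
  · exact (ContinuousMultilinearMap.cont _).comp (continuous_pi fun _ => h2)
  · exact (hφ.continuous_iteratedFDeriv (by exact_mod_cast le_top)).comp
      (h2.clm_apply continuous_fst)

theorem iter_bound {N : ℕ} {φ : EuclideanSpace ℝ (Fin N) → ℝ} (hφ : ContDiff ℝ ∞ φ)
    (hs : HasCompactSupport φ) (m : ℕ) :
    ∃ C, ∀ (x : EuclideanSpace ℝ (Fin N)) (R : OG N),
      ‖iteratedFDeriv ℝ m (φ ∘ rotI R) x‖ ≤ C := by
  obtain ⟨C, hC⟩ := (hφ.continuous_iteratedFDeriv (m := m)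
    (by exact_mod_cast le_top)).bounded_above_of_compact_support (hs.iteratedFDeriv m)
  refine ⟨C, fun x R => ?_⟩
  rw [LinearIsometryEquiv.norm_iteratedFDeriv_comp_right]
  exact hC _

theorem cont_fix {X Y Z : Type*} [TopologicalSpace X] [TopologicalSpace Y] [TopologicalSpace Z]
    {f : X × Y → Z} (hf : Continuous f) (x : X) : Continuous fun y => f (x, y) :=
  hf.comp (Continuous.prodMk_right x)

theorem fderiv_int_gen {E α G H : Type*} [NormedAddCommGroup E] [NormedSpace ℝ E]
    [NormedAddCommGroup G] [NormedSpace ℝ G] [NormedAddCommGroup H] [NormedSpace ℝ H]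
    [MeasurableSpace α] (μ : Measure α) [IsFiniteMeasure μ]
    (L : H ≃ₗᵢ[ℝ] (E →L[ℝ] G)) (F : E → α → G) (D : E → α → H)
    (hF : ∀ x, Integrable (F x) μ) (hD : ∀ x, Integrable (D x) μ) (C : ℝ)
    (hC : ∀ x a, ‖D x a‖ ≤ C)
    (hd : ∀ a x, HasFDerivAt (fun y => F y a) (L (D x a)) x) (x : E) :
    HasFDerivAt (fun x => ∫ a, F x a ∂μ) (L (∫ a, D x a ∂μ)) x := by
  have key := hasFDerivAt_integral_of_dominated_of_fderiv_le (𝕜 := ℝ) (μ := μ)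
    (F := F) (F' := fun x a => L (D x a))
    (bound := fun _ => C) (x₀ := x) univ_mem
    (Eventually.of_forall fun y => (hF y).aestronglyMeasurable)
    (hF x) (L.continuous.comp_aestronglyMeasurable (hD x).aestronglyMeasurable)
    (Eventually.of_forall fun a y _ => by
      rw [LinearIsometryEquiv.norm_map]; exact hC y a)
    (integrable_const C)
    (Eventually.of_forall fun a y _ => hd a y)
  have h5 : ∫ a, L (D x a) ∂μ = L (∫ a, D x a ∂μ) :=
    L.toContinuousLinearEquiv.integral_comp_comm (D x)
  rw [← h5]
  exact key

theorem taylor_integral {E α : Type*} [NormedAddCommGroup E] [NormedSpace ℝ E]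
    [MeasurableSpace α] (μ : Measure α) [IsFiniteMeasure μ] (ψ : α → E → ℝ)
    (hψ : ∀ a, ContDiff ℝ ∞ (ψ a))
    (hint : ∀ (m : ℕ) (x : E), Integrable (fun a => iteratedFDeriv ℝ m (ψ a) x) μ)
    (hbd : ∀ m : ℕ, ∃ C, ∀ x a, ‖iteratedFDeriv ℝ m (ψ a) x‖ ≤ C) :
    HasFTaylorSeriesUpTo ∞ (fun x => ∫ a, ψ a x ∂μ)
      (fun x m => ∫ a, iteratedFDeriv ℝ m (ψ a) x ∂μ) := by
  have hd : ∀ (m : ℕ) x, HasFDerivAt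
      (fun x => ∫ a, iteratedFDeriv ℝ m (ψ a) x ∂μ)
      (∫ a, iteratedFDeriv ℝ (m + 1) (ψ a) x ∂μ).curryLeft x := by
    intro m x
    obtain ⟨C, hC⟩ := hbd (m + 1)
    exact fderiv_int_gen μ (continuousMultilinearCurryLeftEquiv ℝ (fun _ : Fin (m + 1) => E) ℝ)
      (fun x a => iteratedFDeriv ℝ m (ψ a) x) (fun x a => iteratedFDeriv ℝ (m + 1) (ψ a) x)
      (hint m) (hint (m + 1)) C hC (fun a y => by
        have h2 := (hψ a).differentiable_iteratedFDeriv (m := m)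
          (by exact_mod_cast WithTop.coe_lt_top _)
        have h3 := (h2 y).hasFDerivAt
        rw [fderiv_iteratedFDeriv] at h3
        exact h3) x
  refine ⟨fun x => ?_, fun m _ x => hd m x, fun m _ => ?_⟩
  · rw [ContinuousMultilinearMap.curry0_apply,
      ContinuousMultilinearMap.integral_apply (hint 0 x)]
    simp
  · exact continuous_iff_continuousAt.2 fun x => (hd m x).continuousAt

theorem int_compact {N : ℕ} {F : Type*} [NormedAddCommGroup F] {g : OG N → F}
    (hg : Continuous g) : Integrable g (muO N) :=
  hg.integrable_of_hasCompactSupport (HasCompactSupport.of_compactSpace _)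

theorem iter_integrable {N : ℕ} {φ : EuclideanSpace ℝ (Fin N) → ℝ} (hφ : ContDiff ℝ ∞ φ)
    (m : ℕ) (x : EuclideanSpace ℝ (Fin N)) :
    Integrable (fun R : OG N => iteratedFDeriv ℝ m (φ ∘ rotI R) x) (muO N) := by
  have h : Continuous (fun R : OG N => iteratedFDeriv ℝ m (φ ∘ rotI R) x) :=
    cont_fix (iter_cont hφ m) x
  exact int_compact h

/-- Rotation average. -/
def avg {N : ℕ} (φ : EuclideanSpace ℝ (Fin N) → ℝ) (x : EuclideanSpace ℝ (Fin N)) : ℝ :=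
  ∫ R : OG N, φ (rotI R x) ∂(muO N)

theorem avg_taylor {N : ℕ} {φ : EuclideanSpace ℝ (Fin N) → ℝ} (hφ : ContDiff ℝ ∞ φ)
    (hs : HasCompactSupport φ) :
    HasFTaylorSeriesUpTo ∞ (avg φ)
      (fun x m => ∫ R : OG N, iteratedFDeriv ℝ m (φ ∘ rotI R) x ∂(muO N)) := by
  exact taylor_integral (muO N) (fun R => φ ∘ rotI R)
    (fun R => hφ.comp (rotI R).contDiff) (fun m x => iter_integrable hφ m x)
    (fun m => iter_bound hφ hs m)

theorem avg_contDiff {N : ℕ} {φ : EuclideanSpace ℝ (Fin N) → ℝ} (hφ : ContDiff ℝ ∞ φ)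
    (hs : HasCompactSupport φ) : ContDiff ℝ ∞ (avg φ) :=
  (avg_taylor hφ hs).contDiff

theorem avg_iter {N : ℕ} {φ : EuclideanSpace ℝ (Fin N) → ℝ} (hφ : ContDiff ℝ ∞ φ)
    (hs : HasCompactSupport φ) (m : ℕ) (x : EuclideanSpace ℝ (Fin N)) :
    iteratedFDeriv ℝ m (avg φ) x =
      ∫ R : OG N, iteratedFDeriv ℝ m (φ ∘ rotI R) x ∂(muO N) :=
  ((avg_taylor hφ hs).eq_iteratedFDeriv (by exact_mod_cast le_top) x).symm

theorem avg_rot {N : ℕ} (φ : EuclideanSpace ℝ (Fin N) → ℝ)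
    (S : EuclideanSpace ℝ (Fin N) ≃ₗᵢ[ℝ] EuclideanSpace ℝ (Fin N)) (x : EuclideanSpace ℝ (Fin N)) :
    avg φ (S x) = avg φ x := by
  set s : OG N := Unitary.linearIsometryEquiv.symm S with hsdef
  have h := integral_mul_left_eq_self (μ := muO N) (fun R : OG N => φ (rotI R (S x))) s
  rw [avg, ← h, avg]
  congr 1
  funext R
  congr 1
  have : rotI (s * R) = rotI R * S⁻¹ := by
    simp [rotI, hsdef, map_mul]
  rw [this]
  simp

theorem avg_zero {N : ℕ} (φ : EuclideanSpace ℝ (Fin N) → ℝ) : avg φ 0 = φ 0 := by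
  simp [avg]

theorem avg_supp {N : ℕ} {φ : EuclideanSpace ℝ (Fin N) → ℝ} (hs : HasCompactSupport φ) :
    ∃ K : ℝ, (∀ x, K < ‖x‖ → φ x = 0) ∧ ∀ x, K < ‖x‖ → avg φ x = 0 := by
  obtain ⟨K, hK⟩ := hs.isCompact.isBounded.exists_norm_le
  have h1 : ∀ x, K < ‖x‖ → φ x = 0 := fun x hx => by
    by_contra h
    exact absurd (hK x (subset_tsupport _ h)) (not_le.2 hx)
  refine ⟨K, h1, fun x hx => ?_⟩
  have : ∀ R : OG N, φ (rotI R x) = 0 := fun R => h1 _ (by simpa using hx)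
  simp [avg, this]

theorem multi_single_le {N m : ℕ}
    (A : ContinuousMultilinearMap ℝ (fun _ : Fin m => EuclideanSpace ℝ (Fin N)) ℝ)
    (i : Fin m → Fin N) : |A (fun k => EuclideanSpace.single (i k) 1)| ≤ ‖A‖ := by
  have := A.le_opNorm (fun k => EuclideanSpace.single (i k) 1)
  simpa using this

theorem logNorm_bound {N : ℕ} (hN : 0 < N) : ∃ C, 0 ≤ C ∧ ∀ x : EuclideanSpace ℝ (Fin N),
    ‖x‖ ^ N * ‖iteratedFDeriv ℝ N (logNorm N) x‖ ≤ C := by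
  set e : EuclideanSpace ℝ (Fin N) := EuclideanSpace.single (⟨0, hN⟩ : Fin N) 1 with he
  have he1 : ‖e‖ = 1 := by simp [he]
  refine ⟨‖iteratedFDeriv ℝ N (logNorm N) e‖, norm_nonneg _, fun x => ?_⟩
  by_cases hx : x = 0
  · simp [hx, hN.ne']
  have hr0 : ‖x‖ ≠ 0 := norm_ne_zero_iff.2 hx
  obtain ⟨R, hR⟩ := exists_rot (x := e) (y := ‖x‖⁻¹ • x) (by
    rw [he1, norm_smul, norm_inv, norm_norm, inv_mul_cancel₀ hr0])
  have hxe : x = ‖x‖ • R e := by rw [hR, smul_smul, mul_inv_cancel₀ hr0, one_smul]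
  have hRe : R e ≠ 0 := by rw [← norm_ne_zero_iff, R.norm_map, he1]; exact one_ne_zero
  have h1 := iterScale (m := N) hr0 (logNorm N) (R e)
  rw [logNorm_scale hN.ne' hr0 hRe, ← hxe] at h1
  have h2 := R.norm_iteratedFDeriv_comp_right (𝕜 := ℝ) (logNorm N) e N
  rw [logNorm_rot, h1, norm_smul, norm_pow, norm_norm] at h2
  exact h2.ge

theorem logNorm_meas {N : ℕ} (i : Fin N → Fin N) :
    Measurable (mixedPartial N N (logNorm N) i) := by
  refine measurable_of_continuousOn_compl_singleton 0 ?_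
  intro x hx
  have hx' : x ≠ 0 := hx
  have h1 : ContinuousAt (iteratedFDeriv ℝ N (logNorm N)) x :=
    (ContDiffAt.iteratedFDeriv_right (𝕜 := ℝ) (m := 0) (i := N) (logNorm_contDiffAt (n := ∞) hx')
      (by simp; exact_mod_cast le_top)).continuousAt
  have h2 : ContinuousAt (fun y => iteratedFDeriv ℝ N (logNorm N) y
      (fun k => EuclideanSpace.single (i k) 1)) x :=
    (ContinuousMultilinearMap.apply ℝ (fun _ : Fin N => EuclideanSpace ℝ (Fin N)) ℝ
      (fun k => EuclideanSpace.single (i k) 1)).continuous.continuousAt.comp h1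
  exact h2.continuousWithinAt

theorem integral_rot {N : ℕ} (φ : EuclideanSpace ℝ (Fin N) → ℝ)
    (R : EuclideanSpace ℝ (Fin N) ≃ₗᵢ[ℝ] EuclideanSpace ℝ (Fin N)) :
    ∫ x, ‖x‖ ^ N * pairT N (φ ∘ R) (logNorm N) x =
      ∫ x, ‖x‖ ^ N * pairT N φ (logNorm N) x := by
  have h : ∀ x, ‖x‖ ^ N * pairT N (φ ∘ R) (logNorm N) x =
      (fun y => ‖y‖ ^ N * pairT N φ (logNorm N) y) (R x) := by
    intro x
    have := pairT_rot R φ (logNorm N) x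
    rw [logNorm_rot] at this
    simp [this]
  simp_rw [h]
  exact R.measurePreserving.integral_comp R.toHomeomorph.measurableEmbedding
    (fun y : EuclideanSpace ℝ (Fin N) => ‖y‖ ^ N * pairT N φ (logNorm N) y)

theorem prod_integrable {N : ℕ} (hN : 0 < N) {φ : EuclideanSpace ℝ (Fin N) → ℝ}
    (hφ : ContDiff ℝ ∞ φ) (hs : HasCompactSupport φ) :
    Integrable (fun p : EuclideanSpace ℝ (Fin N) × OG N =>
      ‖p.1‖ ^ N * pairT N (φ ∘ rotI p.2) (logNorm N) p.1) (volume.prod (muO N)) := by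
  have h0 : (fun p : EuclideanSpace ℝ (Fin N) × OG N =>
      ‖p.1‖ ^ N * pairT N (φ ∘ rotI p.2) (logNorm N) p.1) = fun p => ∑ i : Fin N → Fin N,
      mixedPartial N N (φ ∘ rotI p.2) i p.1 * (‖p.1‖ ^ N * mixedPartial N N (logNorm N) i p.1) := by
    funext p
    rw [pairT, Finset.mul_sum]
    refine Finset.sum_congr rfl fun i _ => ?_
    ring
  rw [h0]
  refine integrable_finsetSum _ fun i _ => ?_
  obtain ⟨C, hC⟩ := iter_bound hφ hs N
  obtain ⟨C', hC0, hC'⟩ := logNorm_bound hN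
  obtain ⟨K, hK, -⟩ := avg_supp hs
  have hg : Integrable ((closedBall (0 : EuclideanSpace ℝ (Fin N)) K).indicator
      (fun _ => C * C')) volume :=
    (integrable_indicator_iff measurableSet_closedBall).2
      (integrableOn_const (isCompact_closedBall _ _).measure_lt_top.ne)
  refine (hg.comp_fst (muO N)).mono' ?_ ?_
  · have hm1 : Continuous fun p : EuclideanSpace ℝ (Fin N) × OG N =>
        mixedPartial N N (φ ∘ rotI p.2) i p.1 :=
      (ContinuousMultilinearMap.apply ℝ (fun _ : Fin N => EuclideanSpace ℝ (Fin N)) ℝ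
        (fun k => EuclideanSpace.single (i k) 1)).continuous.comp (iter_cont hφ N)
    have hm2 : Measurable fun p : EuclideanSpace ℝ (Fin N) × OG N =>
        ‖p.1‖ ^ N * mixedPartial N N (logNorm N) i p.1 :=
      (measurable_fst.norm.pow_const N).mul ((logNorm_meas i).comp measurable_fst)
    exact (hm1.measurable.mul hm2).aestronglyMeasurable
  · refine Eventually.of_forall fun p => ?_
    by_cases hp : p.1 ∈ closedBall (0 : EuclideanSpace ℝ (Fin N)) K
    · rw [Set.indicator_of_mem hp, norm_mul]
      refine mul_le_mul ((multi_single_le _ i).trans (hC _ _)) ?_ (norm_nonneg _)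
        ((norm_nonneg _).trans (hC p.1 p.2))
      rw [norm_mul, norm_pow, norm_norm]
      exact (mul_le_mul_of_nonneg_left (multi_single_le _ i) (by positivity)).trans (hC' p.1)
    · rw [Set.indicator_of_notMem hp]
      have hp' : K < ‖p.1‖ := by simpa using hp
      have h1 : (φ ∘ rotI p.2) =ᶠ[nhds p.1] fun _ => 0 := by
        filter_upwards [(isOpen_lt continuous_const continuous_norm).mem_nhds hp'] with y hy
        exact hK _ (by simpa using hy)
      have h2 := (h1.iteratedFDeriv ℝ N).eq_of_nhds
      have h3 : mixedPartial N N (φ ∘ rotI p.2) i p.1 = 0 := by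
        rw [mixedPartial, h2, iteratedFDeriv_const_of_ne hN.ne']
        simp
      simp [h3]

theorem pairT_avg {N : ℕ} {φ : EuclideanSpace ℝ (Fin N) → ℝ}
    (hφ : ContDiff ℝ ∞ φ) (hs : HasCompactSupport φ) (x : EuclideanSpace ℝ (Fin N)) :
    pairT N (avg φ) (logNorm N) x =
      ∫ R : OG N, pairT N (φ ∘ rotI R) (logNorm N) x ∂(muO N) := by
  unfold pairT
  have hi : ∀ i : Fin N → Fin N,
      Integrable (fun R : OG N => mixedPartial N N (φ ∘ rotI R) i x) (muO N) := fun i =>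
    (ContinuousMultilinearMap.apply ℝ (fun _ : Fin N => EuclideanSpace ℝ (Fin N)) ℝ
        (fun k => EuclideanSpace.single (i k) 1)).integrable_comp (iter_integrable hφ N x)
  rw [integral_finsetSum _ (fun i _ => (hi i).mul_const _)]
  refine Finset.sum_congr rfl fun i _ => ?_
  rw [integral_mul_const]
  congr 1
  rw [mixedPartial, avg_iter hφ hs,
    ContinuousMultilinearMap.integral_apply (iter_integrable hφ N x)]
  rfl

theorem integral_avg {N : ℕ} (hN : 0 < N) {φ : EuclideanSpace ℝ (Fin N) → ℝ}
    (hφ : ContDiff ℝ ∞ φ) (hs : HasCompactSupport φ) :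
    ∫ x, ‖x‖ ^ N * pairT N (avg φ) (logNorm N) x =
      ∫ x, ‖x‖ ^ N * pairT N φ (logNorm N) x := by
  simp_rw [pairT_avg hφ hs, ← integral_const_mul]
  rw [integral_integral_swap (prod_integrable hN hφ hs)]
  simp_rw [integral_rot]
  simp

theorem main_aux {N : ℕ} (hN : 0 < N) {φ : EuclideanSpace ℝ (Fin N) → ℝ}
    (hφ : ContDiff ℝ ∞ φ) (hs : HasCompactSupport φ) :
    ∫ x, ‖x‖ ^ N * pairT N φ (logNorm N) x = -(ell N hN) * omegaSphere N * φ 0 := by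
  set e : EuclideanSpace ℝ (Fin N) := EuclideanSpace.single (⟨0, hN⟩ : Fin N) 1 with he
  have he1 : ‖e‖ = 1 := by simp [he]
  set f : ℝ → ℝ := fun r => avg φ (r • e) with hf
  have hfc : ContDiff ℝ ∞ f := (avg_contDiff hφ hs).comp (contDiff_id.smul contDiff_const)
  have hfs : HasCompactSupport f := by
    obtain ⟨K, -, hK⟩ := avg_supp hs
    refine HasCompactSupport.intro (isCompact_closedBall (0:ℝ) K) fun r hr => ?_
    refine hK _ ?_
    rw [norm_smul, he1, mul_one]
    simpa using hr
  have hrad : avg φ = fun y => f ‖y‖ := by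
    funext y
    obtain ⟨R, hR⟩ := exists_rot (x := ‖y‖ • e) (y := y) (by
      rw [norm_smul, norm_norm, he1, mul_one])
    simp only [hf]
    rw [← avg_rot φ R (‖y‖ • e), hR]
  rw [← integral_avg hN hφ hs, hrad, integral_radial hN hfc hfs]
  simp [hf, avg_zero]

/-- `log|x|` is a fundamental solution, up to the factor `-ℓ_N ω_{N-1}`, of the
operator `(-1)^N ∑ ∂^N(|x|^N ∂^N ·)`: for every test function `φ`,
`∫ |x|^N (∇^N φ)·(∇^N log|x|) = -ℓ_N ω_{N-1} φ(0)`. -/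
theorem statement6 (N : ℕ) (hN : 2 ≤ N)
    (φ : EuclideanSpace ℝ (Fin N) → ℝ)
    (hφ : ContDiff ℝ (⊤ : ℕ∞) φ) (hsupp : HasCompactSupport φ) :
    ∫ x, ‖x‖ ^ N * ∑ i : Fin N → Fin N,
        mixedPartial N N φ i x * mixedPartial N N (logNorm N) i x =
      -(ell N (by omega)) * omegaSphere N * φ 0 := by
  exact main_aux (by omega) hφ hsupp
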